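/- Let Q be a finite quiver and d a dimension vector. The image of the quantum trace map consists of GL_d-invariant homogenized differential operators: Tr^q(N(Q)_ℏ) ⊆ (D_ℏ(Rep(Q,d)))^{GL_d}, where GL_d acts on differential operators by g·D = g∘D∘g⁻¹. -/

import Mathlib

open scoped TensorProduct

/-- A finite quiver: finite sets of vertices and arrows with source and target maps. -/
structure FinQuiver where
  V : Type
  A : Type
  [fintypeV : Fintype V]
  [fintypeA : Fintype A]
  [decEqV : DecidableEq V]
  [decEqA : DecidableEq A]
  src : A → V
  tgt : A → V

attribute [instance] FinQuiver.fintypeV FinQuiver.fintypeA FinQuiver.decEqV FinQuiver.decEqA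

/-- The double quiver `Q̄`: for each arrow `a` (encoded `Sum.inl a`) we add a reversed
arrow `a*` (encoded `Sum.inr a`). -/
@[reducible] def FinQuiver.double (Q : FinQuiver) : FinQuiver where
  V := Q.V
  A := Q.A ⊕ Q.A
  src := Sum.elim Q.src Q.tgt
  tgt := Sum.elim Q.tgt Q.src

namespace FinQuiver

variable (K : Type) [CommRing K] (Q : FinQuiver)

/-- The defining relations of the path algebra `KQ`, presented on the free algebra on
vertices (`Sum.inl`) and arrows (`Sum.inr`): the vertices are orthogonal idempotents summing
to `1`, and each arrow `a` satisfies `e_{t(a)} a = a = a e_{s(a)}`. -/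
inductive PathRel : FreeAlgebra K (Q.V ⊕ Q.A) → FreeAlgebra K (Q.V ⊕ Q.A) → Prop
  | vertex_mul (i j : Q.V) :
      PathRel (FreeAlgebra.ι K (Sum.inl i) * FreeAlgebra.ι K (Sum.inl j))
        (if i = j then FreeAlgebra.ι K (Sum.inl i) else 0)
  | src_mul (a : Q.A) :
      PathRel (FreeAlgebra.ι K (Sum.inr a) * FreeAlgebra.ι K (Sum.inl (Q.src a)))
        (FreeAlgebra.ι K (Sum.inr a))
  | tgt_mul (a : Q.A) :
      PathRel (FreeAlgebra.ι K (Sum.inl (Q.tgt a)) * FreeAlgebra.ι K (Sum.inr a))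
        (FreeAlgebra.ι K (Sum.inr a))
  | sum_vertices :
      PathRel (∑ i : Q.V, FreeAlgebra.ι K (Sum.inl i)) 1

/-- The path algebra `KQ` of a finite quiver, as an algebra presented by generators and
relations. -/
abbrev PathAlg := RingQuot (PathRel K Q)

/-- The idempotent `e_i` of a vertex in the path algebra. -/
noncomputable def vtx (i : Q.V) : PathAlg K Q :=
  RingQuot.mkAlgHom K (PathRel K Q) (FreeAlgebra.ι K (Sum.inl i))

/-- The element of the path algebra corresponding to an arrow. -/
noncomputable def arr (a : Q.A) : PathAlg K Q :=
  RingQuot.mkAlgHom K (PathRel K Q) (FreeAlgebra.ι K (Sum.inr a))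

/-- The product of the arrows in a word (a path, read from left to right). -/
noncomputable def pathProd (w : List Q.A) : PathAlg K Q := (w.map (arr K Q)).prod

/-- The canonical non-commutative moment map `w = ∑_{a ∈ Q₁} (a a* - a* a) ∈ KQ̄`. -/
noncomputable def momentElem : PathAlg K Q.double :=
  ∑ a : Q.A,
    (arr K Q.double (Sum.inl a) * arr K Q.double (Sum.inr a) -
      arr K Q.double (Sum.inr a) * arr K Q.double (Sum.inl a))

end FinQuiver

section Abelianization

variable (K : Type) [CommRing K] (A : Type) [Ring A] [Algebra K A]

/-- The `K`-span of all commutators `ab - ba` in an algebra `A`. -/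
def commSpan : Submodule K A :=
  Submodule.span K {x | ∃ a b : A, x = a * b - b * a}

/-- The "abelianization" `A_♮ = A/[A,A]` of an algebra (as a `K`-module). -/
abbrev AbQuot := A ⧸ commSpan K A

/-- The canonical projection `A → A_♮`. -/
def natProj : A →ₗ[K] AbQuot K A := (commSpan K A).mkQ

end Abelianization

namespace FinQuiver

variable (K : Type) [CommRing K] (Q : FinQuiver)

/-- The class in `(KQ̄)_♮` of a cyclic word of arrows in the double quiver. -/
noncomputable def wordClass (w : List Q.double.A) : AbQuot K (PathAlg K Q.double) :=
  natProj K _ (pathProd K Q.double w)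

/-- The preprojective algebra `ΠQ = KQ̄/(w)`: the quotient of `KQ̄` by the two-sided ideal
generated by the non-commutative moment map `w`. -/
abbrev Preproj := RingQuot (fun x y : PathAlg K Q.double => x = momentElem K Q ∧ y = 0)

/-- The canonical projection `KQ̄ → ΠQ`. -/
noncomputable def preprojProj : PathAlg K Q.double →ₐ[K] Preproj K Q :=
  RingQuot.mkAlgHom K _

/- Representation spaces. -/

/-- A dimension vector. -/
abbrev Dim (Q : FinQuiver) := Q.V → ℕ

variable (d : Dim Q)

/-- The space of `d`-dimensional representations of `Q`:
`Rep(Q,d) = ⊕_{a ∈ Q₁} Hom(K^{d_{s(a)}}, K^{d_{t(a)}})`. -/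
abbrev RepSpace := ∀ a : Q.A, Matrix (Fin (d (Q.tgt a))) (Fin (d (Q.src a))) K

/-- The Lie algebra `𝔤𝔩_d = ⊕_i 𝔤𝔩_{d_i}`. -/
abbrev glD := ∀ i : Q.V, Matrix (Fin (d i)) (Fin (d i)) K

/-- The group `GL_d = ∏_i GL_{d_i}`. -/
abbrev GLD := ∀ i : Q.V, GL (Fin (d i)) K

/-- The "big" index set `⊔_i {1,…,d_i}`, indexing the rows/columns of a representation of the
full path algebra as one big matrix. -/
abbrev BIdx := Σ i : Q.V, Fin (d i)

/-- The matrix attached to an arrow `a ∈ Q₁` by a representation of the double quiver. -/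
def arrMat (ρ : RepSpace K Q.double d) (a : Q.A) :
    Matrix (Fin (d (Q.tgt a))) (Fin (d (Q.src a))) K := ρ (Sum.inl a)

/-- The matrix attached to a reversed arrow `a* ∈ Q̄₁` by a representation of the double
quiver. -/
def astMat (ρ : RepSpace K Q.double d) (a : Q.A) :
    Matrix (Fin (d (Q.src a))) (Fin (d (Q.tgt a))) K := ρ (Sum.inr a)

/-- The moment map `μ : Rep(Q̄,d) → 𝔤𝔩_d`, `ρ ↦ ∑_{a ∈ Q₁} [ρ(a), ρ(a*)]`. -/
noncomputable def momentMapFun (ρ : RepSpace K Q.double d) : glD K Q d := fun i =>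
  (∑ a : Q.A,
      if h : Q.tgt a = i then
        (arrMat K Q d ρ a * astMat K Q d ρ a).submatrix
          (Fin.cast (congrArg d h.symm)) (Fin.cast (congrArg d h.symm))
      else 0) -
  ∑ a : Q.A,
      if h : Q.src a = i then
        (astMat K Q d ρ a * arrMat K Q d ρ a).submatrix
          (Fin.cast (congrArg d h.symm)) (Fin.cast (congrArg d h.symm))
      else 0

/-- Index set for the coordinate functions `(a)_{uv}` on `Rep(Q,d)`. -/
abbrev CoordIdx := Σ a : Q.A, Fin (d (Q.tgt a)) × Fin (d (Q.src a))

/-- The coordinate ring `K[Rep(Q,d)]`, a polynomial ring on the matrix entries. -/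
abbrev CoordRing := MvPolynomial (CoordIdx Q d) K

/-- The entries of any "matrix-valued assignment" on arrows, spread out over the big index
set `BIdx`; entries outside the correct blocks are `0`. -/
def bigMat {S : Type} [Zero S]
    (e : (c : Q.A) → Fin (d (Q.tgt c)) → Fin (d (Q.src c)) → S) (c : Q.A) :
    Matrix (BIdx Q d) (BIdx Q d) S := fun p q =>
  if h : p.1 = Q.tgt c ∧ q.1 = Q.src c then
    e c (Fin.cast (congrArg d h.1) p.2) (Fin.cast (congrArg d h.2) q.2)
  else 0

/-- `wordTrace e w` is `tr(M(c₁) ⋯ M(c_r))` for a word `w = c₁ ⋯ c_r` of arrows, where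
`M(c)` is the big matrix with entries `e c u v`. -/
noncomputable def wordTrace {S : Type} [Ring S]
    (e : (c : Q.A) → Fin (d (Q.tgt c)) → Fin (d (Q.src c)) → S) (w : List Q.A) : S :=
  Matrix.trace ((w.map (bigMat Q d e)).prod)

end FinQuiver

namespace FinQuiver

variable (K : Type) [Field K] (Q : FinQuiver) (d : Dim Q)

/-- The polynomial ring `K[ℏ][Rep(Q,d)]`, i.e. the coordinate ring of `Rep(Q,d)` with an
extra central homogenizing variable `ℏ` (the polynomial variable of `Polynomial K`). -/
abbrev PolyH := MvPolynomial (CoordIdx Q d) (Polynomial K)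

/-- `K`-linear endomorphisms of `K[ℏ][Rep(Q,d)]`; the homogenized differential operators
`D_ℏ(Rep(Q,d))` are realized inside this algebra. -/
def EndH : Type := Module.End K (PolyH K Q d)

noncomputable instance : Ring (EndH K Q d) :=
  inferInstanceAs (Ring (Module.End K (PolyH K Q d)))

noncomputable instance : Algebra K (EndH K Q d) :=
  inferInstanceAs (Algebra K (Module.End K (PolyH K Q d)))

/-- Multiplication operator by a polynomial. -/
noncomputable def mulOpH (f : PolyH K Q d) : EndH K Q d := LinearMap.mulLeft K f

/-- The inclusion `K[Rep(Q,d)] → K[ℏ][Rep(Q,d)]`. -/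
noncomputable def embH : CoordRing K Q d →+* PolyH K Q d :=
  MvPolynomial.map Polynomial.C

/-- The operator `∂/∂x_c`. -/
noncomputable def derOp (c : CoordIdx Q d) : EndH K Q d :=
  ((MvPolynomial.pderiv c).toLinearMap.restrictScalars K : PolyH K Q d →ₗ[K] PolyH K Q d)

/-- The operator `ℏ·1` (multiplication by the homogenizing variable `ℏ`). -/
noncomputable def hbarOp : EndH K Q d := mulOpH K Q d (MvPolynomial.C Polynomial.X)

/-- The degree-one generator `ℏ·∂/∂x_c` of `D_ℏ(Rep(Q,d))`; it satisfies
`X * f - f * X = ℏ X(f)` as required in the definition of the homogenized differential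
operators. -/
noncomputable def hDer (c : CoordIdx Q d) : EndH K Q d :=
  hbarOp K Q d * derOp K Q d c

/-- The homogenized differential operator algebra `D_ℏ(Rep(Q,d))`: the graded
`K[ℏ]`-algebra generated by the coordinate ring `K[Rep(Q,d)]` in degree `0` and the
derivations of `K[Rep(Q,d)]` in degree `1` (a derivation `X` being realized as the
operator `ℏ·X`, so that `X * f - f * X = ℏ X(f)` and `X * Y - Y * X = ℏ [X,Y]`). -/
noncomputable def DiffOpsH : Subalgebra K (EndH K Q d) :=
  Algebra.adjoin K
    ({D | ∃ f : CoordRing K Q d, D = mulOpH K Q d (embH K Q d f)} ∪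
      {D | ∃ v : CoordIdx Q d → CoordRing K Q d,
        D = ∑ c, mulOpH K Q d (embH K Q d (v c)) * hDer K Q d c})

/-- For `g ∈ GL_d`, the pullback along the conjugation action on `Rep(Q,d)`: the algebra
endomorphism of `K[ℏ][Rep(Q,d)]` with `(a)_{uv} ↦ ((g_{t(a)})⁻¹ ρ(a) g_{s(a)})_{uv}`. -/
noncomputable def glPullback (g : GLD K Q d) : PolyH K Q d →ₐ[Polynomial K] PolyH K Q d :=
  MvPolynomial.aeval fun c =>
    ∑ k, ∑ l,
      (MvPolynomial.C (Polynomial.C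
          ((((g (Q.tgt c.1))⁻¹ : GL (Fin (d (Q.tgt c.1))) K) : Matrix _ _ K) c.2.1 k *
            ((g (Q.src c.1) : Matrix _ _ K) l c.2.2))) : PolyH K Q d) *
        MvPolynomial.X ⟨c.1, (k, l)⟩

/-- A (differential) operator `D` is `GL_d`-invariant, for the action `g·D = g ∘ D ∘ g⁻¹`,
iff it commutes with the pullback of every group element. -/
def IsInvH (D : EndH K Q d) : Prop :=
  ∀ g : GLD K Q d,
    ((glPullback K Q d g).toLinearMap.restrictScalars K) ∘ₗ
        (D : Module.End K (PolyH K Q d)) =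
      (D : Module.End K (PolyH K Q d)) ∘ₗ
        ((glPullback K Q d g).toLinearMap.restrictScalars K)

/-- The entries `[x]_{uv}` of arrows of the double quiver acting as homogenized
differential operators: `[a]_{uv}` is multiplication by the coordinate `(a)_{uv}` and
`[a*]_{uv}` is `ℏ·∂/∂(a)_{vu}`. -/
noncomputable def qEntry :
    (c : Q.double.A) → Fin (d (Q.double.tgt c)) → Fin (d (Q.double.src c)) → EndH K Q d
  | Sum.inl a, u, v => mulOpH K Q d (MvPolynomial.X ⟨a, (u, v)⟩)
  | Sum.inr a, u, v => hDer K Q d ⟨a, (v, u)⟩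

/-- Schedler's quantum trace of a cyclic word `w = a₁ ⋯ a_r` of arrows of `Q̄` (with
heights increasing from left to right): `tr([a₁] [a₂] ⋯ [a_r])`. -/
noncomputable def qWordTrace (w : List Q.double.A) : EndH K Q d :=
  wordTrace Q.double d (qEntry K Q d) w

end FinQuiver

section MatrixLemmas

theorem Matrix.list_prod_apply_mem {R S n : Type*} [CommSemiring R] [Semiring S] [Algebra R S]
    [Fintype n] [DecidableEq n] (A : Subalgebra R S) (l : List (Matrix n n S))
    (h : ∀ M ∈ l, ∀ p q, M p q ∈ A) (p q : n) : l.prod p q ∈ A := by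
  induction l generalizing p q with
  | nil =>
    rw [List.prod_nil, Matrix.one_apply]
    split_ifs
    exacts [A.one_mem, A.zero_mem]
  | cons M l ih =>
    rw [List.prod_cons, Matrix.mul_apply]
    exact A.sum_mem fun r _ => A.mul_mem (h M (by simp) p r)
      (ih (fun N hN => h N (by simp [hN])) r q)

theorem Matrix.trace_mul_comm_of_commute {S m n : Type*} [NonUnitalNonAssocSemiring S]
    [Fintype m] [Fintype n] (A : Matrix m n S) (B : Matrix n m S)
    (h : ∀ i j k l, Commute (A i j) (B k l)) : (A * B).trace = (B * A).trace := by
  simp only [Matrix.trace, Matrix.diag, Matrix.mul_apply]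
  rw [Finset.sum_comm]
  exact Finset.sum_congr rfl fun j _ => Finset.sum_congr rfl fun i _ => h i j j i

/-- If `x * M = G⁻¹ * M * G * x` entrywise for a scalar matrix `G`, where `M` runs through a list
of matrices, then `x` commutes with the trace of the product of the list. -/
theorem Matrix.commute_trace_list_prod {R S n : Type*} [CommRing R] [Ring S] [Algebra R S]
    [Fintype n] [DecidableEq n] (G G' : Matrix n n R) (hG : G * G' = 1) (x : S)
    (l : List (Matrix n n S))
    (h : ∀ M ∈ l, ∀ p q, x * M p q = ∑ r, ∑ s, (G' p r * G s q) • (M r s * x)) :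
    Commute x l.prod.trace := by
  have hG' : G' * G = 1 := mul_eq_one_comm.mp hG
  let φ := (algebraMap R S).mapMatrix (m := n)
  have hφ : φ G * φ G' = 1 := by rw [← map_mul, hG, map_one]
  have hφ' : φ G' * φ G = 1 := by rw [← map_mul, hG', map_one]
  have scalar_comm : ∀ A : Matrix n n R, Commute (Matrix.scalar n x) (φ A) := fun A => by
    ext i j
    simp [φ, Matrix.scalar_apply, Algebra.commutes]
  have conj : ∀ M ∈ l, Matrix.scalar n x * M = φ G' * M * φ G * Matrix.scalar n x := by
    intro M hM
    ext p q
    rw [Matrix.scalar_apply, Matrix.diagonal_mul, Matrix.mul_diagonal, h M hM]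
    simp only [Matrix.mul_apply, Finset.sum_mul, φ, RingHom.mapMatrix_apply, Matrix.map_apply]
    rw [Finset.sum_comm]
    refine Finset.sum_congr rfl fun s _ => Finset.sum_congr rfl fun r _ => ?_
    rw [Algebra.smul_def, map_mul, mul_assoc, mul_assoc, mul_assoc, ← mul_assoc (M r s),
      ← Algebra.commutes, mul_assoc]
  have comm : Commute (φ G * Matrix.scalar n x) l.prod := by
    refine Commute.list_prod_right _ _ fun M hM => ?_
    change _ = _
    rw [mul_assoc, conj M hM]
    simp only [← mul_assoc, hφ, one_mul]
  have key : Matrix.scalar n x * l.prod = φ G' * (l.prod * φ G * Matrix.scalar n x) := by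
    rw [mul_assoc, ← comm.eq]
    simp only [← mul_assoc, hφ', one_mul]
  have left : (Matrix.scalar n x * l.prod).trace = x * l.prod.trace := by
    simp [Matrix.trace, Matrix.scalar_apply, Finset.mul_sum]
  have right : ∀ A : Matrix n n S, (A * Matrix.scalar n x).trace = A.trace * x := fun A => by
    simp [Matrix.trace, Matrix.scalar_apply, Finset.sum_mul]
  change _ = _
  rw [← left, key, ← mul_assoc, right,
    Matrix.trace_mul_comm_of_commute (φ G') _ fun i j _ _ => Algebra.commute_algebraMap_left _ _,
    mul_assoc, hφ, mul_one]

end MatrixLemmas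

namespace FinQuiver

section BlockConjugation

variable {K : Type} [Field K] (Q : FinQuiver) (d : Dim Q)

/-- The block diagonal matrix on the big index set attached to an element of `𝔤𝔩_d`. -/
def bigBlock (g : glD K Q d) : Matrix (BIdx Q d) (BIdx Q d) K := Matrix.blockDiagonal' g

theorem mul_bigMat_apply {S : Type} [Ring S] [Algebra K S] (g g' : glD K Q d) (x : S)
    (e : (c : Q.A) → Fin (d (Q.tgt c)) → Fin (d (Q.src c)) → S) (c : Q.A)
    (h : ∀ u v, x * e c u v =
      ∑ k, ∑ l, (g' (Q.tgt c) u k * g (Q.src c) l v) • (e c k l * x))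
    (p q : BIdx Q d) :
    x * bigMat Q d e c p q =
      ∑ r, ∑ s, (bigBlock Q d g' p r * bigBlock Q d g s q) • (bigMat Q d e c r s * x) := by
  obtain ⟨i, u⟩ := p
  obtain ⟨j, v⟩ := q
  have reduce : ∑ r, ∑ s, (bigBlock Q d g' ⟨i, u⟩ r * bigBlock Q d g s ⟨j, v⟩) •
      (bigMat Q d e c r s * x) =
      ∑ k, ∑ l, (g' i u k * g j l v) • (bigMat Q d e c ⟨i, k⟩ ⟨j, l⟩ * x) := by
    rw [Fintype.sum_sigma, Finset.sum_eq_single i]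
    · refine Finset.sum_congr rfl fun k _ => ?_
      rw [Fintype.sum_sigma, Finset.sum_eq_single j]
      · simp [bigBlock]
      · intro b _ hb
        simp [bigBlock, Matrix.blockDiagonal'_apply_ne g _ _ hb]
      · simp
    · intro b _ hb
      simp [bigBlock, Matrix.blockDiagonal'_apply_ne g' _ _ hb.symm]
    · simp
  rw [reduce]
  by_cases hb : i = Q.tgt c ∧ j = Q.src c
  · obtain ⟨rfl, rfl⟩ := hb
    simpa [bigMat] using h u v
  · simp [bigMat, hb]

theorem bigBlock_mul_inv (g : GLD K Q d) :
    bigBlock Q d (fun i => (g i : Matrix _ _ K)) *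
      bigBlock Q d (fun i => (((g i)⁻¹ : GL (Fin (d i)) K) : Matrix _ _ K)) = 1 := by
  rw [bigBlock, bigBlock, ← Matrix.blockDiagonal'_mul, ← Matrix.blockDiagonal'_one]
  congr 1
  funext i
  exact Units.mul_inv (g i)

end BlockConjugation

section Operators

variable (K : Type) [Field K] (Q : FinQuiver) (d : Dim Q)

/-- The pullback `glPullback` as an element of `EndH`. -/
noncomputable def pullbackOp (g : GLD K Q d) : EndH K Q d :=
  (glPullback K Q d g).toLinearMap.restrictScalars K

theorem isInvH_iff (D : EndH K Q d) :
    IsInvH K Q d D ↔ ∀ g : GLD K Q d, Commute (pullbackOp K Q d g) D := Iff.rfl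

theorem pullbackOp_mul_mulOpH (g : GLD K Q d) (f : PolyH K Q d) :
    pullbackOp K Q d g * mulOpH K Q d f =
      mulOpH K Q d (glPullback K Q d g f) * pullbackOp K Q d g :=
  LinearMap.ext fun p => map_mul (glPullback K Q d g) f p

theorem glPullback_X (g : GLD K Q d) (a : Q.A) (u : Fin (d (Q.tgt a))) (v : Fin (d (Q.src a))) :
    glPullback K Q d g (MvPolynomial.X ⟨a, (u, v)⟩) =
      ∑ k, ∑ l, ((((g (Q.tgt a))⁻¹ : GL (Fin (d (Q.tgt a))) K) : Matrix _ _ K) u k *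
        (g (Q.src a) : Matrix _ _ K) l v) • (MvPolynomial.X ⟨a, (k, l)⟩ : PolyH K Q d) := by
  simp only [glPullback, MvPolynomial.aeval_X]
  refine Finset.sum_congr rfl fun k _ => Finset.sum_congr rfl fun l _ => ?_
  rw [Algebra.smul_def]
  rfl

theorem mulOpH_sum_smul {ι κ : Type} [Fintype ι] [Fintype κ] (t : ι → κ → K)
    (f : ι → κ → PolyH K Q d) :
    mulOpH K Q d (∑ k, ∑ l, t k l • f k l) = ∑ k, ∑ l, t k l • mulOpH K Q d (f k l) := by
  have h : ∀ p, mulOpH K Q d p = LinearMap.mul K (PolyH K Q d) p := fun _ => rfl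
  simp only [h, map_sum, map_smul]
  rfl

theorem glPullback_pderiv (g : GLD K Q d) (a : Q.A) (u : Fin (d (Q.src a)))
    (v : Fin (d (Q.tgt a))) (f : PolyH K Q d) :
    glPullback K Q d g (MvPolynomial.pderiv ⟨a, (v, u)⟩ f) =
      ∑ k, ∑ l, ((((g (Q.src a))⁻¹ : GL (Fin (d (Q.src a))) K) : Matrix _ _ K) u k *
        (g (Q.tgt a) : Matrix _ _ K) l v) •
          MvPolynomial.pderiv ⟨a, (l, k)⟩ (glPullback K Q d g f) := by
  induction f using MvPolynomial.induction_on with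
  | C r =>
    simp [glPullback, MvPolynomial.algebraMap_eq]
  | add p q hp hq =>
    simp only [map_add, hp, hq, smul_add, Finset.sum_add_distrib]
  | mul_X p c hp =>
    have hX : glPullback K Q d g (MvPolynomial.pderiv ⟨a, (v, u)⟩ (MvPolynomial.X c)) =
      ∑ k, ∑ l, ((((g (Q.src a))⁻¹ : GL (Fin (d (Q.src a))) K) : Matrix _ _ K) u k *
        (g (Q.tgt a) : Matrix _ _ K) l v) •
          MvPolynomial.pderiv ⟨a, (l, k)⟩ (glPullback K Q d g (MvPolynomial.X c)) := by
      obtain ⟨b, v₁, u₁⟩ := c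
      rw [glPullback_X]
      by_cases hab : b = a
      · subst hab
        have hs := Matrix.ext_iff.mpr (Units.inv_mul (g (Q.src b))) u u₁
        have ht := Matrix.ext_iff.mpr (Units.inv_mul (g (Q.tgt b))) v₁ v
        rw [Matrix.mul_apply, Matrix.one_apply] at hs ht
        have hder : ∀ k l, MvPolynomial.pderiv ⟨b, (l, k)⟩ (∑ k₁, ∑ l₁,
            ((((g (Q.tgt b))⁻¹ : GL (Fin (d (Q.tgt b))) K) : Matrix _ _ K) v₁ k₁ *
              (g (Q.src b) : Matrix _ _ K) l₁ u₁) •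
                (MvPolynomial.X ⟨b, (k₁, l₁)⟩ : PolyH K Q d)) =
            algebraMap K (PolyH K Q d)
              ((((g (Q.tgt b))⁻¹ : GL (Fin (d (Q.tgt b))) K) : Matrix _ _ K) v₁ l *
                (g (Q.src b) : Matrix _ _ K) k u₁) := by
          intro k l
          simp only [map_sum, Derivation.map_smul_of_tower, MvPolynomial.pderiv_X]
          rw [Finset.sum_eq_single l, Finset.sum_eq_single k]
          · simp [Algebra.smul_def]
          · intro k₁ _ hk
            simp [hk]
          · simp
          · intro l₁ _ hl
            simp [hl]
          · simp
        simp only [hder]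
        simp only [Algebra.smul_def, ← map_mul, ← map_sum]
        trans algebraMap K (PolyH K Q d)
          ((if u = u₁ then 1 else 0) * (if v₁ = v then 1 else 0))
        · rw [MvPolynomial.pderiv_X]
          by_cases hu : u = u₁ <;> by_cases hv : v₁ = v <;> simp [hu, hv]
        · rw [← hs, ← ht, Finset.sum_mul_sum]
          congr 1
          refine Finset.sum_congr rfl fun k _ => Finset.sum_congr rfl fun l _ => ?_
          ring
      · have hne : ∀ x y, (⟨b, x⟩ : CoordIdx Q d) ≠ ⟨a, y⟩ := fun x y h =>
          hab (congrArg Sigma.fst h)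
        simp [MvPolynomial.pderiv_X_of_ne (hne _ _), Derivation.map_smul_of_tower]
    simp only [MvPolynomial.pderiv_mul, map_add, map_mul, hp, hX, smul_add,
      Finset.sum_add_distrib, Finset.sum_mul, Finset.mul_sum, smul_mul_assoc, mul_smul_comm]

theorem commute_pullbackOp_hbarOp (g : GLD K Q d) :
    Commute (pullbackOp K Q d g) (hbarOp K Q d) := by
  change _ = _
  rw [hbarOp, pullbackOp_mul_mulOpH]
  congr 2
  exact (glPullback K Q d g).commutes Polynomial.X

theorem pullbackOp_mul_derOp (g : GLD K Q d) (a : Q.A) (u : Fin (d (Q.src a)))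
    (v : Fin (d (Q.tgt a))) :
    pullbackOp K Q d g * derOp K Q d ⟨a, (v, u)⟩ =
      ∑ k, ∑ l, ((((g (Q.src a))⁻¹ : GL (Fin (d (Q.src a))) K) : Matrix _ _ K) u k *
        (g (Q.tgt a) : Matrix _ _ K) l v) •
          (derOp K Q d ⟨a, (l, k)⟩ * pullbackOp K Q d g) := by
  refine LinearMap.ext fun f => (glPullback_pderiv K Q d g a u v f).trans ?_
  symm
  refine (LinearMap.sum_apply _ _ _).trans (Finset.sum_congr rfl fun k _ => ?_)
  exact LinearMap.sum_apply _ _ _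

theorem pullbackOp_mul_mulOpH_X (g : GLD K Q d) (a : Q.A) (u : Fin (d (Q.tgt a)))
    (v : Fin (d (Q.src a))) :
    pullbackOp K Q d g * mulOpH K Q d (MvPolynomial.X ⟨a, (u, v)⟩) =
      ∑ k, ∑ l, ((((g (Q.tgt a))⁻¹ : GL (Fin (d (Q.tgt a))) K) : Matrix _ _ K) u k *
        (g (Q.src a) : Matrix _ _ K) l v) •
          (mulOpH K Q d (MvPolynomial.X ⟨a, (k, l)⟩) * pullbackOp K Q d g) := by
  rw [pullbackOp_mul_mulOpH, glPullback_X, mulOpH_sum_smul]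
  simp only [Finset.sum_mul, smul_mul_assoc]

theorem pullbackOp_mul_hDer (g : GLD K Q d) (a : Q.A) (u : Fin (d (Q.src a)))
    (v : Fin (d (Q.tgt a))) :
    pullbackOp K Q d g * hDer K Q d ⟨a, (v, u)⟩ =
      ∑ k, ∑ l, ((((g (Q.src a))⁻¹ : GL (Fin (d (Q.src a))) K) : Matrix _ _ K) u k *
        (g (Q.tgt a) : Matrix _ _ K) l v) •
          (hDer K Q d ⟨a, (l, k)⟩ * pullbackOp K Q d g) := by
  simp only [hDer]
  rw [← mul_assoc, (commute_pullbackOp_hbarOp K Q d g).eq, mul_assoc, pullbackOp_mul_derOp]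
  simp only [Finset.mul_sum, mul_smul_comm, ← mul_assoc]

theorem pullbackOp_mul_qEntry (g : GLD K Q d) (c : Q.double.A)
    (u : Fin (d (Q.double.tgt c))) (v : Fin (d (Q.double.src c))) :
    pullbackOp K Q d g * qEntry K Q d c u v =
      ∑ k, ∑ l, ((((g (Q.double.tgt c))⁻¹ : GL (Fin (d (Q.double.tgt c))) K) :
          Matrix _ _ K) u k * (g (Q.double.src c) : Matrix _ _ K) l v) •
        (qEntry K Q d c k l * pullbackOp K Q d g) := by
  cases c with
  | inl a => exact pullbackOp_mul_mulOpH_X K Q d g a u v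
  | inr a => exact pullbackOp_mul_hDer K Q d g a u v

theorem commute_pullbackOp_qWordTrace (g : GLD K Q d) (w : List Q.double.A) :
    Commute (pullbackOp K Q d g) (qWordTrace K Q d w) := by
  refine Matrix.commute_trace_list_prod _ _ (bigBlock_mul_inv Q.double d g) _ _ fun M hM => ?_
  obtain ⟨c, -, rfl⟩ := List.mem_map.mp hM
  exact mul_bigMat_apply Q.double d _ _ _ _ c (pullbackOp_mul_qEntry K Q d g c)

theorem qEntry_mem_DiffOpsH (c : Q.double.A) (u : Fin (d (Q.double.tgt c)))
    (v : Fin (d (Q.double.src c))) : qEntry K Q d c u v ∈ DiffOpsH K Q d := by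
  cases c with
  | inl a =>
    exact Algebra.subset_adjoin (Or.inl ⟨MvPolynomial.X ⟨a, (u, v)⟩, by simp [qEntry, embH]⟩)
  | inr a =>
    refine Algebra.subset_adjoin (Or.inr ⟨Pi.single ⟨a, (v, u)⟩ 1, ?_⟩)
    have h0 : mulOpH K Q d 0 = 0 := LinearMap.mulLeft_zero_eq_zero K _
    have h1 : mulOpH K Q d 1 = 1 := LinearMap.mulLeft_one K _
    rw [Finset.sum_eq_single ⟨a, (v, u)⟩]
    · simp [qEntry, h1]
    · intro b _ hb
      simp [hb, h0]
    · simp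

theorem qWordTrace_mem_DiffOpsH (w : List Q.double.A) :
    qWordTrace K Q d w ∈ DiffOpsH K Q d := by
  refine Subalgebra.sum_mem _ fun p _ => Matrix.list_prod_apply_mem _ _ (fun M hM r s => ?_) p p
  obtain ⟨c, -, rfl⟩ := List.mem_map.mp hM
  unfold bigMat
  split_ifs
  · exact qEntry_mem_DiffOpsH K Q d c _ _
  · exact Subalgebra.zero_mem _

end Operators

end FinQuiver

open FinQuiver in
/-- (Proposition 5.3.)  Let `Q` be a finite quiver and `d` a dimension
vector.  The image of the quantum trace map consists of `GL_d`-invariant homogenized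
differential operators: `Tr^q(N(Q)_ℏ) ⊆ (D_ℏ(Rep(Q,d)))^{GL_d}`, where `GL_d` acts on
differential operators by `g·D = g ∘ D ∘ g⁻¹`.  (The image of `Tr^q` is the
`K[ℏ]`-span of the products `∏ᵢ tr(∏ⱼ [a_{ij}])` over finite families of cyclic words,
so the claim is that each such product lies in the invariant part of `D_ℏ(Rep(Q,d))`.) -/
theorem quantum_trace_image_GL_invariant
    (K : Type) [Field K] [IsAlgClosed K] [CharZero K] (Q : FinQuiver) (d : Dim Q)
    (ws : List (List Q.double.A)) :
    ((ws.map (qWordTrace K Q d)).prod ∈ DiffOpsH K Q d) ∧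
      IsInvH K Q d ((ws.map (qWordTrace K Q d)).prod) := by
  constructor
  · refine Subalgebra.list_prod_mem _ fun D hD => ?_
    obtain ⟨w, -, rfl⟩ := List.mem_map.mp hD
    exact qWordTrace_mem_DiffOpsH K Q d w
  · refine (isInvH_iff K Q d _).mpr fun g => Commute.list_prod_right _ _ fun D hD => ?_
    obtain ⟨w, -, rfl⟩ := List.mem_map.mp hD
    exact commute_pullbackOp_qWordTrace K Q d g w
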